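/- Let V' be a finite-dimensional vector space, V = V' ⊕ V'^* with the natural symmetric bilinear form <(u,φ),(u',φ')> = φ'(u) + φ(u'). Let A' ∈ End(V') and A = A' ⊕ (-A'^*). Then there exists an isometry T of the form on V with TAT^{-1} = -A and det T = (-1)^{dim V'}. -/

import Mathlib

open Polynomial in
lemma aux_repr {K S : Type*} [Field K] [CommRing S] [Algebra K S] (pb : PowerBasis K S)
    (h : K[X]) (hh : h.natDegree < pb.dim) (k : Fin pb.dim) :
    pb.basis.repr (aeval pb.gen h) k = h.coeff k := by
  rw [aeval_eq_sum_range' hh, ← Fin.sum_univ_eq_sum_range (fun i => h.coeff i • pb.gen ^ i)]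
  simp_rw [← pb.basis_eq_pow, map_sum, map_smul, Module.Basis.repr_self]
  simp [Finsupp.single_apply]

open Polynomial in
lemma aux_functional {K S : Type*} [Field K] [CommRing S] [Algebra K S] (pb : PowerBasis K S) :
    ∃ l : S →ₗ[K] K, ∀ x, (∀ y, l (x * y) = 0) → x = 0 := by
  rcases subsingleton_or_nontrivial S with hS | hS
  · exact ⟨0, fun x _ => Subsingleton.elim _ _⟩
  have hd : 0 < pb.dim := pb.dim_pos
  refine ⟨pb.basis.coord ⟨pb.dim - 1, by omega⟩, fun x hx => ?_⟩
  obtain ⟨g, hg, rfl⟩ := pb.exists_eq_aeval x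
  by_contra hne
  have hg0 : g ≠ 0 := by rintro rfl; simp at hne
  have h1 := hx (aeval pb.gen (X ^ (pb.dim - 1 - g.natDegree) : K[X]))
  rw [← map_mul, Module.Basis.coord_apply, aux_repr] at h1
  · have h2 : (pb.dim - 1) = g.natDegree + (pb.dim - 1 - g.natDegree) := by omega
    simp only at h1
    rw [coeff_mul_X_pow', if_pos (by omega)] at h1
    have h3 : pb.dim - 1 - (pb.dim - 1 - g.natDegree) = g.natDegree := by omega
    rw [h3] at h1
    exact hg0 (leadingCoeff_eq_zero.mp h1)
  · rw [natDegree_mul_X_pow (hp := hg0)]; omega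

universe u v

open Polynomial in
lemma aux_quot {K : Type u} [Field K] (f : K[X]) :
    ∃ e : (K[X] ⧸ Submodule.span K[X] {f}) ≃ₗ[K] AdjoinRoot f,
      ∀ q, e ((X : K[X]) • q) = AdjoinRoot.root f * e q := by
  refine ⟨LinearEquiv.mk (LinearMap.mk (AddHom.mk (fun q => q) (fun _ _ => rfl))
    (fun c q => ?_)) (fun q => q) (fun _ => rfl) (fun _ => rfl), fun q => ?_⟩
  · obtain ⟨g, rfl⟩ := Submodule.Quotient.mk_surjective _ q
    rfl
  · obtain ⟨g, rfl⟩ := Submodule.Quotient.mk_surjective _ q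
    rfl

open Polynomial in
lemma aux_decomp {K : Type u} {V : Type v} [Field K] [AddCommGroup V] [Module K V]
    [FiniteDimensional K V] (A : Module.End K V) :
    ∃ (ι : Type u) (_ : Fintype ι) (f : ι → K[X]) (_ : ∀ i, f i ≠ 0)
      (e : V ≃ₗ[K] ∀ i, AdjoinRoot (f i)),
      ∀ v i, e (A v) i = AdjoinRoot.root (f i) * e v i := by
  classical
  obtain ⟨ι, hι, p, hp, n, ⟨e⟩⟩ := Module.equiv_directSum_of_isTorsion
    (Module.AEval.isTorsion_of_finiteDimensional K V A)
  choose q hq using fun i => aux_quot (p i ^ n i)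
  let e2 : Module.AEval K V A ≃ₗ[K[X]] ∀ i, (K[X] ⧸ Submodule.span K[X] {p i ^ n i}) :=
    e.trans (DirectSum.linearEquivFunOnFintype K[X] ι _)
  refine ⟨ι, hι, fun i => p i ^ n i, fun i => pow_ne_zero _ (hp i).ne_zero,
    ((Module.AEval.of K V A).trans (e2.restrictScalars K)).trans
      (LinearEquiv.piCongrRight q), fun v i => ?_⟩
  have h := e2.map_smul (X : K[X]) (Module.AEval.of K V A v)
  rw [Module.AEval.X_smul_of] at h
  have h' := congrArg (q i) (congrFun h i)
  exact h'.trans (hq i _)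

lemma aux_form {K V : Type*} [Field K] [AddCommGroup V] [Module K V] [FiniteDimensional K V]
    (A : Module.End K V) :
    ∃ C : V ≃ₗ[K] Module.Dual K V, (∀ u v, C u v = C v u) ∧ ∀ u v, C (A u) v = C u (A v) := by
  classical
  obtain ⟨ι, hι, f, hf, e, he⟩ := aux_decomp A
  choose l hl using fun i => aux_functional (AdjoinRoot.powerBasis (hf i))
  let B : V →ₗ[K] Module.Dual K V := LinearMap.mk₂ K (fun u v => ∑ i, l i (e u i * e v i))
    (by intros; simp [add_mul, Finset.sum_add_distrib])
    (by intros; simp [Finset.mul_sum])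
    (by intros; simp [mul_add, Finset.sum_add_distrib])
    (by intros; simp [Finset.mul_sum])
  have hB : ∀ u v, B u v = ∑ i, l i (e u i * e v i) := fun u v => rfl
  have hinj : Function.Injective B := by
    rw [injective_iff_map_eq_zero]
    intro u hu
    rw [← e.map_eq_zero_iff]
    funext i
    refine hl i _ fun y => ?_
    have := hB u (e.symm (Pi.single i y))
    rw [hu, Finset.sum_eq_single i] at this
    · simpa using this.symm
    · intro j _ hj
      simp [hj]
    · simp
  refine ⟨LinearEquiv.ofInjectiveOfFinrankEq B hinj Subspace.dual_finrank_eq.symm, ?_, ?_⟩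
  · intro u v
    change B u v = B v u
    simp only [hB, mul_comm]
  · intro u v
    change B (A u) v = B u (A v)
    simp only [hB, he]
    exact Finset.sum_congr rfl fun i _ => by congr 1; ring

lemma aux_det {K V : Type*} [Field K] [AddCommGroup V] [Module K V] [FiniteDimensional K V] :
    LinearMap.det ((LinearEquiv.prodComm K V V : (V × V) ≃ₗ[K] (V × V)) : (V × V) →ₗ[K] (V × V))
      = (-1 : K) ^ Module.finrank K V := by
  classical
  let b := Module.finBasis K V
  rw [← LinearMap.det_toMatrix (b.prod b)]
  have : LinearMap.toMatrix (b.prod b) (b.prod b)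
      ((LinearEquiv.prodComm K V V : (V × V) ≃ₗ[K] (V × V)) : (V × V) →ₗ[K] (V × V))
      = Matrix.fromBlocks 0 1 1 0 := by
    ext (i | i) (j | j) <;>
      simp [LinearMap.toMatrix_apply, Matrix.one_apply, Finsupp.single_apply, eq_comm]
  rw [this]
  have h2 : (Matrix.fromBlocks 0 1 1 0 : 
    Matrix (Fin (Module.finrank K V) ⊕ Fin (Module.finrank K V))
      (Fin (Module.finrank K V) ⊕ Fin (Module.finrank K V)) K)
    * Matrix.fromBlocks 1 0 1 1 = Matrix.fromBlocks 1 1 1 0 := by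
    simp [Matrix.fromBlocks_multiply]
  have h3 := congrArg Matrix.det h2
  rw [Matrix.det_mul, Matrix.det_fromBlocks_zero₁₂, Matrix.det_fromBlocks_one₁₁] at h3
  simpa [Matrix.det_neg] using h3

theorem stmt17 {K V' : Type*} [Field K] [AddCommGroup V'] [Module K V'] [FiniteDimensional K V']
    (A' : Module.End K V') :
    ∃ T : (V' × Module.Dual K V') ≃ₗ[K] (V' × Module.Dual K V'),
      (∀ p q : V' × Module.Dual K V',
        (T q).2 (T p).1 + (T p).2 (T q).1 = q.2 p.1 + p.2 q.1) ∧
      (∀ p : V' × Module.Dual K V',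
        T ((A'.prodMap (-A'.dualMap)) p) = - (A'.prodMap (-A'.dualMap)) (T p)) ∧
      LinearMap.det (T : (V' × Module.Dual K V') →ₗ[K] (V' × Module.Dual K V'))
        = (-1 : K) ^ Module.finrank K V' := by
  obtain ⟨C, hs, hA⟩ := aux_form A'
  have hCA : ∀ u, C (A' u) = A'.dualMap (C u) := fun u => by
    ext v; simpa using hA u v
  let e : (V' × V') ≃ₗ[K] (V' × Module.Dual K V') := (LinearEquiv.refl K V').prodCongr C
  refine ⟨(e.symm.trans (LinearEquiv.prodComm K V' V')).trans e, ?_, ?_, ?_⟩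
  · rintro ⟨u, φ⟩ ⟨v, ψ⟩
    obtain ⟨x, rfl⟩ := C.surjective φ
    obtain ⟨y, rfl⟩ := C.surjective ψ
    simp [e, hs v x, hs u y, add_comm]
  · rintro ⟨u, φ⟩
    obtain ⟨x, rfl⟩ := C.surjective φ
    have h1 : C.symm (A'.dualMap (C x)) = A' x := by rw [← hCA, C.symm_apply_apply]
    simp [e, hCA, h1]
  · rw [← aux_det (K := K) (V := V'), ← LinearMap.det_conj _ e]
    rfl
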